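/- Let q be a (sufficiently smooth) solution of the barotropic vorticity equation q_t + J(ψ,q) + βψ_x = f + νΔq − rq, q = Δψ, with boundary conditions q = 0, ψ = 0 on ∂D and initial condition q(·,·,0) = q₀. Then for all t ≥ 0, ‖q(t)‖² ≤ ‖q₀‖² e^{−2αt} + (1/r) ∫₀ᵗ ‖f(s)‖² e^{2α(s−t)} ds, where α = r/2 + πν/|D| − (|β|/2)(|D|/π + 1). -/

import Mathlib

open MeasureTheory Real Filter Topology

/-- Partial derivative in the `x` direction. -/
noncomputable def pdx (u : ℝ × ℝ → ℝ) (p : ℝ × ℝ) : ℝ := fderiv ℝ u p (1, 0)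

/-- Partial derivative in the `y` direction. -/
noncomputable def pdy (u : ℝ × ℝ → ℝ) (p : ℝ × ℝ) : ℝ := fderiv ℝ u p (0, 1)

/-- The Jacobian operator `J(u,v) = u_x v_y - u_y v_x`. -/
noncomputable def jac (u v : ℝ × ℝ → ℝ) (p : ℝ × ℝ) : ℝ :=
  pdx u p * pdy v p - pdy u p * pdx v p

/-- The Laplacian `Δu = u_xx + u_yy`. -/
noncomputable def lap (u : ℝ × ℝ → ℝ) (p : ℝ × ℝ) : ℝ :=
  pdx (pdx u) p + pdy (pdy u) p

/-- The squared `L²(D)` norm `‖u‖² = ∫_D u² dxdy`. -/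
noncomputable def l2sq (D : Set (ℝ × ℝ)) (u : ℝ × ℝ → ℝ) : ℝ :=
  ∫ p in D, (u p) ^ 2

/-- The `L²(D)` norm. -/
noncomputable def l2norm (D : Set (ℝ × ℝ)) (u : ℝ × ℝ → ℝ) : ℝ :=
  Real.sqrt (l2sq D u)

/-- The squared `L²(D)` norm of the gradient, `‖∇u‖² = ∫_D |∇u|² dxdy`. -/
noncomputable def gradsq (D : Set (ℝ × ℝ)) (u : ℝ × ℝ → ℝ) : ℝ :=
  ∫ p in D, ((pdx u p) ^ 2 + (pdy u p) ^ 2)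

/-- The `L²(D)` norm of the gradient. -/
noncomputable def gradNorm (D : Set (ℝ × ℝ)) (u : ℝ × ℝ → ℝ) : ℝ :=
  Real.sqrt (gradsq D u)

/-- The area `|D|` of the domain. -/
noncomputable def area (D : Set (ℝ × ℝ)) : ℝ := (volume D).toReal

/-- The constant `α = r/2 + πν/|D| - (|β|/2)(|D|/π + 1)`. -/
noncomputable def alphaConst (D : Set (ℝ × ℝ)) (β ν r : ℝ) : ℝ :=
  r / 2 + π * ν / area D - |β| / 2 * (area D / π + 1)

/-- A space-time field that is smooth jointly in time and space. -/
def SmoothField (u : ℝ → ℝ × ℝ → ℝ) : Prop :=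
  ContDiff ℝ (⊤ : ℕ∞) (Function.uncurry u)

/-- A space-time field that is mean-square integrable in space and time
(on the time interval `[0,∞)` and the spatial domain `D`). -/
def MeanSquareIntegrable (D : Set (ℝ × ℝ)) (f : ℝ → ℝ × ℝ → ℝ) : Prop :=
  (∀ t, 0 ≤ t → Integrable (fun p => (f t p) ^ 2) (volume.restrict D)) ∧
  (∀ T, 0 < T → IntervalIntegrable (fun t => l2sq D (f t)) volume 0 T)

/-- `SolvesBVE D β ν r q ψ f g` says that the vorticity `q`, with streamfunction `ψ`,
solves the barotropic vorticity equation
`q_t + J(ψ,q) + β ψ_x = f + ν Δq - r q + g` on the domain `D` for all times `t ≥ 0`,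
with the relation `q = Δψ` and zero boundary conditions `q = 0`, `ψ = 0` on `∂D`.
The extra field `g` is an additional forcing term (e.g. a subgrid-scale stress,
a stochastic parameterization, or `0`). -/
def SolvesBVE (D : Set (ℝ × ℝ)) (β ν r : ℝ) (q ψ f g : ℝ → ℝ × ℝ → ℝ) : Prop :=
  (∀ t, 0 ≤ t → ∀ p ∈ D, q t p = lap (ψ t) p) ∧
  (∀ t, 0 ≤ t → ∀ p ∈ frontier D, q t p = 0 ∧ ψ t p = 0) ∧
  (∀ t, 0 ≤ t → ∀ p ∈ D,
    deriv (fun s => q s p) t + jac (ψ t) (q t) p + β * pdx (ψ t) p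
      = f t p + ν * lap (q t) p - r * q t p + g t p)

/-! Multiplying the vorticity equation by `q` and integrating over `D`, the advection term drops
out, being the divergence of a field that vanishes on `∂D`, and the viscous term becomes
`-ν ‖∇q‖²`. Young's inequality absorbs the forcing into half of the Ekman damping. The `β` term is
at most `|β| ‖q‖ ‖ψ_x‖`, and the Poincaré inequality `κ ‖ψ‖² ≤ |D| ‖∇ψ‖²` together with
`‖∇ψ‖² ≤ ‖ψ‖ ‖Δψ‖` gives `κ ‖ψ_x‖² ≤ |D| ‖q‖²`. Gronwall's inequality concludes.

The Poincaré constant comes from integrating along coordinate lines: `2 |u(x, y)|` is bounded by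
the integral of `|u_x|` over the row through `(x, y)` and by that of `|u_y|` over the column, so
`4 ‖u‖² ≤ (∫ |u_x|) (∫ |u_y|)` by Fubini, whence `8 ‖u‖² ≤ |D| ‖∇u‖²`, and `π ≤ 8`. A slice of `D`
is a countable disjoint union of intervals whose endpoints lie on `∂D`, so integration by parts
needs only the vanishing of `u` on `∂D`, with no regularity of the boundary. -/

/-! ### Connected components of open sets -/

section Components

variable {X : Type*} [TopologicalSpace X]

lemma frontier_connectedComponentIn_subset [LocallyConnectedSpace X] {O : Set X} (hO : IsOpen O)
    (x : X) : frontier (connectedComponentIn O x) ⊆ frontier O := by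
  intro y hy
  rw [hO.connectedComponentIn.frontier_eq] at hy
  rw [hO.frontier_eq]
  refine ⟨closure_mono (connectedComponentIn_subset O x) hy.1, fun hyO => hy.2 ?_⟩
  obtain ⟨z, hzy, hzx⟩ := mem_closure_iff.1 hy.1 _ hO.connectedComponentIn
    (mem_connectedComponentIn hyO)
  rw [connectedComponentIn_eq hzx, ← connectedComponentIn_eq hzy]
  exact mem_connectedComponentIn hyO

lemma pairwiseDisjoint_connectedComponentIn_image (O : Set X) :
    (connectedComponentIn O '' O).PairwiseDisjoint id := by
  rintro _ ⟨_, -, rfl⟩ _ ⟨_, -, rfl⟩ hne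
  refine Set.disjoint_left.2 fun _ hzx hzy => hne ?_
  rw [connectedComponentIn_eq hzx, connectedComponentIn_eq hzy]

lemma sUnion_connectedComponentIn_image (O : Set X) : ⋃₀ (connectedComponentIn O '' O) = O :=
  (Set.sUnion_subset (Set.forall_mem_image.2 fun x _ => connectedComponentIn_subset O x)).antisymm
    fun _ hx => ⟨_, Set.mem_image_of_mem _ hx, mem_connectedComponentIn hx⟩

lemma countable_connectedComponentIn_image [LocallyConnectedSpace X]
    [TopologicalSpace.SeparableSpace X] {O : Set X} (hO : IsOpen O) :
    (connectedComponentIn O '' O).Countable :=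
  (pairwiseDisjoint_connectedComponentIn_image O).countable_of_isOpen
    (Set.forall_mem_image.2 fun _ _ => hO.connectedComponentIn)
    (Set.forall_mem_image.2 fun _ hx => connectedComponentIn_nonempty_iff.2 hx)

lemma exists_eq_Ioo_of_isOpen_of_isConnected {α : Type*} [ConditionallyCompleteLinearOrder α]
    [TopologicalSpace α] [OrderTopology α] [DenselyOrdered α] [NoMinOrder α] [NoMaxOrder α]
    {C : Set α} (hCo : IsOpen C) (hC : IsConnected C) (hbelow : BddBelow C) (habove : BddAbove C) :
    ∃ a b, a < b ∧ C = Set.Ioo a b := by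
  have hsub : C ⊆ Set.Ioo (sInf C) (sSup C) := by
    rw [← interior_Icc]
    exact interior_maximal (subset_Icc_csInf_csSup hbelow habove) hCo
  exact ⟨sInf C, sSup C, Set.nonempty_Ioo.1 (hC.nonempty.mono hsub),
    hsub.antisymm (hC.Ioo_csInf_csSup_subset hbelow habove)⟩

lemma exists_connectedComponentIn_eq_Ioo {O : Set ℝ} (hO : IsOpen O)
    (hOb : Bornology.IsBounded O) {x : ℝ} (hx : x ∈ O) :
    ∃ a b, a < b ∧ connectedComponentIn O x = Set.Ioo a b ∧ a ∈ frontier O ∧ b ∈ frontier O := by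
  have hCb := hOb.subset (connectedComponentIn_subset O x)
  obtain ⟨a, b, hab, hC⟩ := exists_eq_Ioo_of_isOpen_of_isConnected hO.connectedComponentIn
    (isConnected_connectedComponentIn_iff.2 hx) hCb.bddBelow hCb.bddAbove
  have hfr := frontier_connectedComponentIn_subset hO x
  rw [hC, frontier_Ioo hab] at hfr
  exact ⟨a, b, hab, hC, hfr (by simp), hfr (by simp)⟩

end Components

/-! ### Integrals over bounded sets -/

section BoundedSets

variable {X E : Type*} [PseudoMetricSpace X] [ProperSpace X] [MeasurableSpace X]
  [OpensMeasurableSpace X] {μ : Measure X} [IsFiniteMeasureOnCompacts μ] [NormedAddCommGroup E]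
  {s : Set X} {g : X → E}

lemma memLp_restrict_of_continuous_of_isBounded (hg : Continuous g) (hs : Bornology.IsBounded s)
    (p : ENNReal) : MemLp g p (μ.restrict s) := by
  have hK : IsCompact (closure s) := hs.isCompact_closure
  obtain ⟨C, hC⟩ := hK.exists_bound_of_continuousOn hg.continuousOn
  have : IsFiniteMeasure (μ.restrict (closure s)) := isFiniteMeasure_restrict.2 hK.measure_ne_top
  exact (MemLp.of_bound hg.aestronglyMeasurable C
    ((ae_restrict_mem isClosed_closure.measurableSet).mono hC)).mono_measure
    (Measure.restrict_mono subset_closure le_rfl)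

lemma integrableOn_of_continuous_of_isBounded (hg : Continuous g) (hs : Bornology.IsBounded s) :
    IntegrableOn g s μ :=
  memLp_one_iff_integrable.1 (memLp_restrict_of_continuous_of_isBounded hg hs 1)

lemma hasDerivAt_setIntegral_of_isBounded [NormedSpace ℝ E] {F F' : ℝ → X → E}
    (hF : ∀ t x, HasDerivAt (F · x) (F' t x) t) (hFc : ∀ t, Continuous (F t))
    (hF'c : Continuous (Function.uncurry F')) (hs : Bornology.IsBounded s)
    (hsm : MeasurableSet s) (t : ℝ) :
    HasDerivAt (fun τ => ∫ x in s, F τ x ∂μ) (∫ x in s, F' t x ∂μ) t := by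
  obtain ⟨C, hC⟩ := ((isCompact_Icc (a := t - 1) (b := t + 1)).prod
    hs.isCompact_closure).exists_bound_of_continuousOn hF'c.continuousOn
  refine (hasDerivAt_integral_of_dominated_loc_of_deriv_le (bound := fun _ => C)
    (Icc_mem_nhds (sub_one_lt t) (lt_add_one t))
    (Eventually.of_forall fun τ => (hFc τ).aestronglyMeasurable)
    (integrableOn_of_continuous_of_isBounded (hFc t) hs)
    (hF'c.comp (Continuous.prodMk_right t)).aestronglyMeasurable ?_
    (integrableOn_of_continuous_of_isBounded continuous_const hs)
    (Eventually.of_forall fun x τ _ => hF τ x)).2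
  filter_upwards [ae_restrict_mem hsm] with x hx τ hτ
  exact hC (τ, x) ⟨hτ, subset_closure hx⟩

end BoundedSets

lemma sq_integral_mul_le {α : Type*} [MeasurableSpace α] {μ : Measure α} {f g : α → ℝ}
    (hf : MemLp f 2 μ) (hg : MemLp g 2 μ) :
    (∫ x, f x * g x ∂μ) ^ 2 ≤ (∫ x, f x ^ 2 ∂μ) * ∫ x, g x ^ 2 ∂μ := by
  have inner_toLp {u v : α → ℝ} (hu : MemLp u 2 μ) (hv : MemLp v 2 μ) :
      inner ℝ (hu.toLp u) (hv.toLp v) = ∫ x, u x * v x ∂μ := by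
    rw [L2.inner_def]
    refine integral_congr_ae ?_
    filter_upwards [hu.coeFn_toLp, hv.coeFn_toLp] with x hux hvx
    rw [hux, hvx, RCLike.inner_apply, conj_trivial, mul_comm]
  simpa only [inner_toLp, ← sq] using real_inner_mul_inner_self_le (hf.toLp f) (hg.toLp g)

/-! ### Functions of one variable vanishing on the frontier of an open set -/

section OneVariable

variable {E : Type*} [NormedAddCommGroup E] [NormedSpace ℝ E] [CompleteSpace E] {O : Set ℝ}
  {u u' : ℝ → E}

lemma setIntegral_deriv_eq_zero (hO : IsOpen O) (hOb : Bornology.IsBounded O)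
    (hu : ∀ x, HasDerivAt u (u' x) x) (hu' : Continuous u') (hu0 : ∀ x ∈ frontier O, u x = 0) :
    ∫ x in O, u' x = 0 := by
  have := (countable_connectedComponentIn_image hO).to_subtype
  have hcomponent : ∀ C ∈ connectedComponentIn O '' O, ∫ x in C, u' x = 0 := by
    refine Set.forall_mem_image.2 fun x hx => ?_
    obtain ⟨a, b, hab, hC, ha, hb⟩ := exists_connectedComponentIn_eq_Ioo hO hOb hx
    rw [hC, ← integral_Ioc_eq_integral_Ioo, ← intervalIntegral.integral_of_le hab.le,
      intervalIntegral.integral_eq_sub_of_hasDerivAt (fun y _ => hu y)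
        (hu'.intervalIntegrable a b), hu0 a ha, hu0 b hb, sub_zero]
  have hmeas : ∀ C ∈ connectedComponentIn O '' O, MeasurableSet C :=
    Set.forall_mem_image.2 fun _ _ => hO.connectedComponentIn.measurableSet
  have hint : IntegrableOn u' O := integrableOn_of_continuous_of_isBounded hu' hOb
  rw [← sUnion_connectedComponentIn_image O, Set.sUnion_eq_iUnion] at hint ⊢
  rw [integral_iUnion (s := fun C : ↥(connectedComponentIn O '' O) => (C : Set ℝ))
    (fun C => hmeas C C.2) (fun C C' hne => pairwiseDisjoint_connectedComponentIn_image O C.2 C'.2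
      (Subtype.coe_injective.ne hne)) hint]
  simp_rw [hcomponent _ (Subtype.prop _), tsum_zero]

lemma two_mul_norm_le_setIntegral_norm_deriv (hO : IsOpen O) (hOb : Bornology.IsBounded O)
    (hu : ∀ x, HasDerivAt u (u' x) x) (hu' : Continuous u') (hu0 : ∀ x ∈ frontier O, u x = 0)
    {x : ℝ} (hx : x ∈ O) : 2 * ‖u x‖ ≤ ∫ y in O, ‖u' y‖ := by
  obtain ⟨a, b, hab, hC, ha, hb⟩ := exists_connectedComponentIn_eq_Ioo hO hOb hx
  obtain ⟨hax, hxb⟩ : x ∈ Set.Ioo a b := hC ▸ mem_connectedComponentIn hx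
  have ftc (c d : ℝ) : ∫ y in c..d, u' y = u d - u c :=
    intervalIntegral.integral_eq_sub_of_hasDerivAt (fun y _ => hu y) (hu'.intervalIntegrable c d)
  have hleft : ‖u x‖ ≤ ∫ y in a..x, ‖u' y‖ := by
    simpa [ftc, hu0 a ha] using intervalIntegral.norm_integral_le_integral_norm (f := u')
      (μ := volume) hax.le
  have hright : ‖u x‖ ≤ ∫ y in x..b, ‖u' y‖ := by
    simpa [ftc, hu0 b hb] using intervalIntegral.norm_integral_le_integral_norm (f := u')
      (μ := volume) hxb.le
  calc 2 * ‖u x‖ ≤ (∫ y in a..x, ‖u' y‖) + ∫ y in x..b, ‖u' y‖ := by linarith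
    _ = ∫ y in Set.Ioo a b, ‖u' y‖ := by
      rw [intervalIntegral.integral_add_adjacent_intervals (hu'.norm.intervalIntegrable a x)
        (hu'.norm.intervalIntegrable x b), intervalIntegral.integral_of_le hab.le,
        integral_Ioc_eq_integral_Ioo]
    _ ≤ ∫ y in O, ‖u' y‖ :=
      setIntegral_mono_set (integrableOn_of_continuous_of_isBounded hu'.norm hOb)
        (Eventually.of_forall fun _ => norm_nonneg _)
        (hC ▸ connectedComponentIn_subset O x).eventuallyLE

end OneVariable

/-! ### Slices of sets in a product -/

section Slices

variable {α β E : Type*} [MeasurableSpace α] [MeasurableSpace β] {μ : Measure α} {ν : Measure β}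
  [NormedAddCommGroup E] [NormedSpace ℝ E] {s : Set (α × β)}
  {g : α × β → E}

lemma integral_indicator_slice (hs : MeasurableSet s) (y : β) :
    ∫ x, s.indicator g (x, y) ∂μ = ∫ x in (·, y) ⁻¹' s, g (x, y) ∂μ :=
  integral_indicator (f := fun x => g (x, y)) (measurable_prodMk_right hs)

variable [SFinite μ] [SFinite ν]

lemma integrable_setIntegral_slice (hs : MeasurableSet s) (hg : IntegrableOn g s (μ.prod ν)) :
    Integrable (fun y => ∫ x in (·, y) ⁻¹' s, g (x, y) ∂μ) ν := by
  simpa only [integral_indicator_slice hs] using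
    ((integrable_indicator_iff hs).2 hg).integral_prod_right

lemma setIntegral_eq_integral_slice (hs : MeasurableSet s) (hg : IntegrableOn g s (μ.prod ν)) :
    ∫ p in s, g p ∂μ.prod ν = ∫ y, ∫ x in (·, y) ⁻¹' s, g (x, y) ∂μ ∂ν := by
  simp only [← integral_indicator hs, ← integral_indicator_slice hs,
    integral_prod_symm _ ((integrable_indicator_iff hs).2 hg)]

lemma setIntegral_preimage_swap (s : Set (α × β)) (g : α × β → E) :
    ∫ p in Prod.swap ⁻¹' s, g p.swap ∂ν.prod μ = ∫ p in s, g p ∂μ.prod ν :=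
  Measure.measurePreserving_swap.setIntegral_preimage_emb
    MeasurableEquiv.prodComm.measurableEmbedding g s

lemma setIntegral_le_integral_mul_integral {h : α × β → ℝ} {a : α → ℝ} {b : β → ℝ}
    (hs : MeasurableSet s) (hh : ∀ p, 0 ≤ h p) (ha : Integrable a μ) (hb : Integrable b ν)
    (ha0 : ∀ x, 0 ≤ a x) (hb0 : ∀ y, 0 ≤ b y) (hle : ∀ p ∈ s, h p ≤ a p.1 * b p.2) :
    ∫ p in s, h p ∂μ.prod ν ≤ (∫ x, a x ∂μ) * ∫ y, b y ∂ν := by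
  have hab := ha.mul_prod hb
  calc ∫ p in s, h p ∂μ.prod ν ≤ ∫ p in s, a p.1 * b p.2 ∂μ.prod ν :=
        integral_mono_of_nonneg (Eventually.of_forall hh) hab.integrableOn
          ((ae_restrict_mem hs).mono hle)
    _ ≤ ∫ p, a p.1 * b p.2 ∂μ.prod ν :=
        setIntegral_le_integral hab
          (Eventually.of_forall fun p => mul_nonneg (ha0 p.1) (hb0 p.2))
    _ = (∫ x, a x ∂μ) * ∫ y, b y ∂ν := integral_prod_mul a b

end Slices

/-! ### Partial derivatives -/

section PartialDerivatives

variable {u v : ℝ × ℝ → ℝ}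

lemma pdx_comp_swap (u : ℝ × ℝ → ℝ) (p : ℝ × ℝ) : pdx (u ∘ Prod.swap) p = pdy u p.swap := by
  have h := (ContinuousLinearEquiv.prodComm ℝ ℝ ℝ).comp_right_fderiv (f := u) (x := p)
  exact congrArg (fun L : ℝ × ℝ →L[ℝ] ℝ => L (1, 0)) h

lemma contDiff_comp_swap {n : WithTop ℕ∞} (hu : ContDiff ℝ n u) :
    ContDiff ℝ n (u ∘ Prod.swap) :=
  hu.comp (contDiff_snd.prodMk contDiff_fst)

lemma hasDerivAt_comp_prodMk_left (hu : Differentiable ℝ u) (x y : ℝ) :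
    HasDerivAt (fun s => u (s, y)) (pdx u (x, y)) x :=
  (hu (x, y)).hasFDerivAt.comp_hasDerivAt x ((hasDerivAt_id x).prodMk (hasDerivAt_const x y))

lemma contDiff_pdx {m n : WithTop ℕ∞} (hu : ContDiff ℝ n u) (hmn : m + 1 ≤ n) :
    ContDiff ℝ m (pdx u) :=
  (hu.fderiv_right hmn).clm_apply contDiff_const

lemma contDiff_pdy {m n : WithTop ℕ∞} (hu : ContDiff ℝ n u) (hmn : m + 1 ≤ n) :
    ContDiff ℝ m (pdy u) :=
  (hu.fderiv_right hmn).clm_apply contDiff_const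

lemma continuous_pdx (hu : ContDiff ℝ 1 u) : Continuous (pdx u) :=
  (contDiff_pdx (m := 0) hu (zero_add 1).le).continuous

lemma continuous_pdy (hu : ContDiff ℝ 1 u) : Continuous (pdy u) :=
  (contDiff_pdy (m := 0) hu (zero_add 1).le).continuous

lemma contDiff_one_pdx (hu : ContDiff ℝ 2 u) : ContDiff ℝ 1 (pdx u) :=
  contDiff_pdx hu one_add_one_eq_two.le

lemma contDiff_one_pdy (hu : ContDiff ℝ 2 u) : ContDiff ℝ 1 (pdy u) :=
  contDiff_pdy hu one_add_one_eq_two.le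

lemma continuous_lap (hu : ContDiff ℝ 2 u) : Continuous (lap u) :=
  (continuous_pdx (contDiff_one_pdx hu)).add (continuous_pdy (contDiff_one_pdy hu))

lemma continuous_jac (hu : ContDiff ℝ 1 u) (hv : ContDiff ℝ 1 v) : Continuous (jac u v) :=
  ((continuous_pdx hu).mul (continuous_pdy hv)).sub ((continuous_pdy hu).mul (continuous_pdx hv))

variable {p : ℝ × ℝ}

lemma pdx_mul (hu : DifferentiableAt ℝ u p) (hv : DifferentiableAt ℝ v p) :
    pdx (fun p => u p * v p) p = u p * pdx v p + v p * pdx u p := by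
  simp [pdx, fderiv_fun_mul hu hv]

lemma pdy_mul (hu : DifferentiableAt ℝ u p) (hv : DifferentiableAt ℝ v p) :
    pdy (fun p => u p * v p) p = u p * pdy v p + v p * pdy u p := by
  simp [pdy, fderiv_fun_mul hu hv]

lemma pdx_pdy_comm (hu : ContDiffAt ℝ 2 u p) : pdx (pdy u) p = pdy (pdx u) p := by
  have hdiff : DifferentiableAt ℝ (fderiv ℝ u) p :=
    (hu.fderiv_right (m := 1) one_add_one_eq_two.le).differentiableAt one_ne_zero
  have hsymm : IsSymmSndFDerivAt ℝ u p :=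
    hu.isSymmSndFDerivAt minSmoothness_of_isRCLikeNormedField.le
  have hfderiv (a : ℝ × ℝ) :
      fderiv ℝ (fun z => fderiv ℝ u z a) p = (fderiv ℝ (fderiv ℝ u) p).flip a := by
    rw [fderiv_clm_apply hdiff (differentiableAt_const a)]
    simp
  exact (DFunLike.congr_fun (hfderiv (0, 1)) (1, 0)).trans <|
    (hsymm (1, 0) (0, 1)).trans (DFunLike.congr_fun (hfderiv (1, 0)) (0, 1)).symm

end PartialDerivatives

/-! ### Functions on a planar domain vanishing on the boundary -/

section Planar

variable {D : Set (ℝ × ℝ)} {u v : ℝ × ℝ → ℝ}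

lemma isBounded_slice (hDb : Bornology.IsBounded D) (y : ℝ) :
    Bornology.IsBounded ((·, y) ⁻¹' D : Set ℝ) :=
  hDb.image_fst.subset fun x hx => ⟨(x, y), hx, rfl⟩

lemma eq_zero_on_frontier_slice (hu0 : ∀ p ∈ frontier D, u p = 0) (y : ℝ) :
    ∀ x ∈ frontier ((·, y) ⁻¹' D : Set ℝ), u (x, y) = 0 :=
  fun _ hx => hu0 _ ((Continuous.prodMk_left y).frontier_preimage_subset D hx)

lemma isBounded_preimage_swap (hDb : Bornology.IsBounded D) :
    Bornology.IsBounded (Prod.swap ⁻¹' D) := by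
  rw [← Set.image_swap_eq_preimage_swap]
  exact (hDb.image_snd.prod hDb.image_fst).subset
    (Set.image_subset_iff.2 fun p hp => ⟨⟨p, hp, rfl⟩, ⟨p, hp, rfl⟩⟩)

lemma eq_zero_on_frontier_preimage_swap (hu0 : ∀ p ∈ frontier D, u p = 0) :
    ∀ p ∈ frontier (Prod.swap ⁻¹' D), (u ∘ Prod.swap) p = 0 :=
  fun _ hp => hu0 _ (continuous_swap.frontier_preimage_subset D hp)

lemma setIntegral_pdx_eq_zero (hD : IsOpen D) (hDb : Bornology.IsBounded D)
    (hu : ContDiff ℝ 1 u) (hu0 : ∀ p ∈ frontier D, u p = 0) : ∫ p in D, pdx u p = 0 := by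
  have hc := continuous_pdx hu
  rw [Measure.volume_eq_prod, setIntegral_eq_integral_slice hD.measurableSet
    (integrableOn_of_continuous_of_isBounded hc hDb)]
  refine (integral_congr_ae (Eventually.of_forall fun y => ?_)).trans (integral_zero ℝ ℝ)
  exact setIntegral_deriv_eq_zero (hD.preimage (Continuous.prodMk_left y)) (isBounded_slice hDb y)
    (hasDerivAt_comp_prodMk_left (hu.differentiable one_ne_zero) · y)
    (hc.comp (Continuous.prodMk_left y)) (eq_zero_on_frontier_slice hu0 y)

lemma setIntegral_pdy_eq_zero (hD : IsOpen D) (hDb : Bornology.IsBounded D)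
    (hu : ContDiff ℝ 1 u) (hu0 : ∀ p ∈ frontier D, u p = 0) : ∫ p in D, pdy u p = 0 := by
  have h := setIntegral_pdx_eq_zero (hD.preimage continuous_swap) (isBounded_preimage_swap hDb)
    (contDiff_comp_swap hu) (eq_zero_on_frontier_preimage_swap hu0)
  simp only [pdx_comp_swap] at h
  rwa [Measure.volume_eq_prod, setIntegral_preimage_swap] at h

lemma two_mul_abs_le_setIntegral_abs_pdx (hD : IsOpen D) (hDb : Bornology.IsBounded D)
    (hu : ContDiff ℝ 1 u) (hu0 : ∀ p ∈ frontier D, u p = 0) {p : ℝ × ℝ} (hp : p ∈ D) :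
    2 * |u p| ≤ ∫ x in (·, p.2) ⁻¹' D, |pdx u (x, p.2)| :=
  two_mul_norm_le_setIntegral_norm_deriv (hD.preimage (Continuous.prodMk_left p.2))
    (isBounded_slice hDb p.2)
    (hasDerivAt_comp_prodMk_left (hu.differentiable one_ne_zero) · p.2)
    ((continuous_pdx hu).comp (Continuous.prodMk_left p.2)) (eq_zero_on_frontier_slice hu0 p.2) hp

lemma two_mul_abs_le_setIntegral_abs_pdy (hD : IsOpen D) (hDb : Bornology.IsBounded D)
    (hu : ContDiff ℝ 1 u) (hu0 : ∀ p ∈ frontier D, u p = 0) {p : ℝ × ℝ} (hp : p ∈ D) :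
    2 * |u p| ≤ ∫ y in (p.1, ·) ⁻¹' D, |pdy u (p.1, y)| := by
  have h := two_mul_abs_le_setIntegral_abs_pdx (hD.preimage continuous_swap)
    (isBounded_preimage_swap hDb) (contDiff_comp_swap hu)
    (eq_zero_on_frontier_preimage_swap hu0) (p := p.swap) hp
  simp only [pdx_comp_swap] at h
  exact h

lemma four_mul_l2sq_le_mul_setIntegral_abs (hD : IsOpen D) (hDb : Bornology.IsBounded D)
    (hu : ContDiff ℝ 1 u) (hu0 : ∀ p ∈ frontier D, u p = 0) :
    4 * l2sq D u ≤ (∫ p in D, |pdx u p|) * ∫ p in D, |pdy u p| := by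
  have hDs : IsOpen (Prod.swap ⁻¹' D) := hD.preimage continuous_swap
  have hx : IntegrableOn (fun p => |pdx u p|) D (volume.prod volume) :=
    integrableOn_of_continuous_of_isBounded (continuous_pdx hu).abs hDb
  have hy : IntegrableOn (fun p => |pdy u p.swap|) (Prod.swap ⁻¹' D) (volume.prod volume) :=
    integrableOn_of_continuous_of_isBounded ((continuous_pdy hu).abs.comp continuous_swap)
      (isBounded_preimage_swap hDb)
  have hle (p : ℝ × ℝ) (hp : p ∈ D) : 4 * u p ^ 2 ≤
      (∫ y in (p.1, ·) ⁻¹' D, |pdy u (p.1, y)|) * ∫ x in (·, p.2) ⁻¹' D, |pdx u (x, p.2)| :=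
    calc 4 * u p ^ 2 = (2 * |u p|) * (2 * |u p|) := by rw [← sq_abs]; ring
      _ ≤ _ := mul_le_mul (two_mul_abs_le_setIntegral_abs_pdy hD hDb hu hu0 hp)
          (two_mul_abs_le_setIntegral_abs_pdx hD hDb hu hu0 hp) (by positivity)
          (integral_nonneg fun _ => abs_nonneg _)
  have hprod := setIntegral_le_integral_mul_integral hD.measurableSet (fun p => by positivity)
    (integrable_setIntegral_slice hDs.measurableSet hy)
    (integrable_setIntegral_slice hD.measurableSet hx)
    (fun _ => integral_nonneg fun _ => abs_nonneg _)
    (fun _ => integral_nonneg fun _ => abs_nonneg _) hle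
  rw [← setIntegral_eq_integral_slice hDs.measurableSet hy,
    ← setIntegral_eq_integral_slice hD.measurableSet hx,
    setIntegral_preimage_swap D fun p => |pdy u p|, ← Measure.volume_eq_prod,
    integral_const_mul, mul_comm (∫ p in D, |pdy u p|)] at hprod
  exact hprod

lemma sq_setIntegral_le_area_mul_l2sq (hDb : Bornology.IsBounded D) (hu : Continuous u) :
    (∫ p in D, u p) ^ 2 ≤ area D * l2sq D u := by
  have h := sq_integral_mul_le (memLp_restrict_of_continuous_of_isBounded (μ := volume)
    (continuous_const (y := (1 : ℝ))) hDb 2) (memLp_restrict_of_continuous_of_isBounded hu hDb 2)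
  simpa [area, l2sq, Measure.real] using h

lemma l2sq_nonneg (D : Set (ℝ × ℝ)) (u : ℝ × ℝ → ℝ) : 0 ≤ l2sq D u :=
  integral_nonneg fun _ => sq_nonneg _

lemma gradsq_nonneg (D : Set (ℝ × ℝ)) (u : ℝ × ℝ → ℝ) : 0 ≤ gradsq D u :=
  integral_nonneg fun _ => by positivity

lemma area_nonneg (D : Set (ℝ × ℝ)) : 0 ≤ area D :=
  ENNReal.toReal_nonneg

lemma gradsq_eq_add (hDb : Bornology.IsBounded D) (hu : ContDiff ℝ 1 u) :
    gradsq D u = l2sq D (pdx u) + l2sq D (pdy u) :=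
  integral_add (integrableOn_of_continuous_of_isBounded ((continuous_pdx hu).pow 2) hDb)
    (integrableOn_of_continuous_of_isBounded ((continuous_pdy hu).pow 2) hDb)

lemma eight_mul_l2sq_le_area_mul_gradsq (hD : IsOpen D) (hDb : Bornology.IsBounded D)
    (hu : ContDiff ℝ 1 u) (hu0 : ∀ p ∈ frontier D, u p = 0) :
    8 * l2sq D u ≤ area D * gradsq D u := by
  have hGNS := four_mul_l2sq_le_mul_setIntegral_abs hD hDb hu hu0
  have hx := sq_setIntegral_le_area_mul_l2sq hDb (continuous_pdx hu).abs
  have hy := sq_setIntegral_le_area_mul_l2sq hDb (continuous_pdy hu).abs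
  have hamgm := two_mul_le_add_sq (∫ p in D, |pdx u p|) (∫ p in D, |pdy u p|)
  simp only [l2sq, sq_abs] at hGNS hx hy
  rw [gradsq_eq_add hDb hu, mul_add]
  simp only [l2sq]
  linarith

lemma l2sq_le_area_div_mul_gradsq {κ : ℝ} (hD : IsOpen D) (hDb : Bornology.IsBounded D)
    (hκ : 0 < κ) (hκ8 : κ ≤ 8) (hu : ContDiff ℝ 1 u) (hu0 : ∀ p ∈ frontier D, u p = 0) :
    l2sq D u ≤ area D / κ * gradsq D u := by
  rw [div_mul_eq_mul_div, le_div_iff₀' hκ]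
  exact (mul_le_mul_of_nonneg_right hκ8 (l2sq_nonneg D u)).trans
    (eight_mul_l2sq_le_area_mul_gradsq hD hDb hu hu0)

-- If `area D = 0`, then `κ / area D = 0` and the inequality persists.
lemma div_area_mul_l2sq_le_gradsq {κ : ℝ} (hD : IsOpen D) (hDb : Bornology.IsBounded D)
    (hκ8 : κ ≤ 8) (hu : ContDiff ℝ 1 u) (hu0 : ∀ p ∈ frontier D, u p = 0) :
    κ / area D * l2sq D u ≤ gradsq D u := by
  rw [div_mul_eq_mul_div]
  exact div_le_of_le_mul₀ (area_nonneg D) (gradsq_nonneg D u) <|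
    ((mul_le_mul_of_nonneg_right hκ8 (l2sq_nonneg D u)).trans
      (eight_mul_l2sq_le_area_mul_gradsq hD hDb hu hu0)).trans_eq (mul_comm _ _)

lemma setIntegral_mul_lap_eq_neg_gradsq (hD : IsOpen D) (hDb : Bornology.IsBounded D)
    (hu : ContDiff ℝ 2 u) (hu0 : ∀ p ∈ frontier D, u p = 0) :
    ∫ p in D, u p * lap u p = -gradsq D u := by
  have hu1 : ContDiff ℝ 1 u := hu.of_le one_le_two
  have hux := contDiff_one_pdx hu
  have huy := contDiff_one_pdy hu
  have hdiv (p : ℝ × ℝ) : u p * lap u p + (pdx u p ^ 2 + pdy u p ^ 2) =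
      pdx (fun p => u p * pdx u p) p + pdy (fun p => u p * pdy u p) p := by
    rw [pdx_mul (hu1.differentiable one_ne_zero p) (hux.differentiable one_ne_zero p),
      pdy_mul (hu1.differentiable one_ne_zero p) (huy.differentiable one_ne_zero p), lap]
    ring
  have hlap : IntegrableOn (fun p => u p * lap u p) D :=
    integrableOn_of_continuous_of_isBounded (hu.continuous.mul (continuous_lap hu)) hDb
  have hgrad : IntegrableOn (fun p => pdx u p ^ 2 + pdy u p ^ 2) D :=
    integrableOn_of_continuous_of_isBounded
      (((continuous_pdx hu1).pow 2).add ((continuous_pdy hu1).pow 2)) hDb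
  rw [eq_neg_iff_add_eq_zero, gradsq, ← integral_add hlap hgrad]
  simp only [hdiv]
  rw [integral_add
    (integrableOn_of_continuous_of_isBounded (continuous_pdx (hu1.mul hux)) hDb)
    (integrableOn_of_continuous_of_isBounded (continuous_pdy (hu1.mul huy)) hDb),
    setIntegral_pdx_eq_zero hD hDb (hu1.mul hux) fun p hp => by rw [hu0 p hp, zero_mul],
    setIntegral_pdy_eq_zero hD hDb (hu1.mul huy) fun p hp => by rw [hu0 p hp, zero_mul], add_zero]

lemma setIntegral_jac_eq_zero (hD : IsOpen D) (hDb : Bornology.IsBounded D)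
    (hu : ContDiff ℝ 2 u) (hv : ContDiff ℝ 1 v) (hv0 : ∀ p ∈ frontier D, v p = 0) :
    ∫ p in D, jac u v p = 0 := by
  have hux := contDiff_one_pdx hu
  have huy := contDiff_one_pdy hu
  have hdiv (p : ℝ × ℝ) :
      jac u v p = pdy (fun p => v p * pdx u p) p - pdx (fun p => v p * pdy u p) p := by
    rw [pdy_mul (hv.differentiable one_ne_zero p) (hux.differentiable one_ne_zero p),
      pdx_mul (hv.differentiable one_ne_zero p) (huy.differentiable one_ne_zero p),
      pdx_pdy_comm hu.contDiffAt, jac]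
    ring
  simp only [hdiv]
  rw [integral_sub
    (integrableOn_of_continuous_of_isBounded (continuous_pdy (hv.mul hux)) hDb)
    (integrableOn_of_continuous_of_isBounded (continuous_pdx (hv.mul huy)) hDb),
    setIntegral_pdy_eq_zero hD hDb (hv.mul hux) fun p hp => by rw [hv0 p hp, zero_mul],
    setIntegral_pdx_eq_zero hD hDb (hv.mul huy) fun p hp => by rw [hv0 p hp, zero_mul], sub_zero]

lemma setIntegral_mul_jac_eq_zero (hD : IsOpen D) (hDb : Bornology.IsBounded D)
    (hu : ContDiff ℝ 2 u) (hv : ContDiff ℝ 1 v) (hv0 : ∀ p ∈ frontier D, v p = 0) :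
    ∫ p in D, v p * jac u v p = 0 := by
  have hchain (p : ℝ × ℝ) : 2 * (v p * jac u v p) = jac u (fun p => v p * v p) p := by
    have hvp := hv.differentiable one_ne_zero p
    rw [jac, jac, pdx_mul hvp hvp, pdy_mul hvp hvp]
    ring
  have h := setIntegral_jac_eq_zero hD hDb hu (hv.mul hv) fun p hp => by rw [hv0 p hp, zero_mul]
  simp only [← hchain, integral_const_mul] at h
  exact (mul_eq_zero.1 h).resolve_left two_ne_zero

lemma gradsq_le_mul_l2sq_lap {C : ℝ} (hD : IsOpen D) (hDb : Bornology.IsBounded D) (hC : 0 ≤ C)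
    (hu : ContDiff ℝ 2 u) (hu0 : ∀ p ∈ frontier D, u p = 0)
    (hP : l2sq D u ≤ C * gradsq D u) : gradsq D u ≤ C * l2sq D (lap u) := by
  have hCS : gradsq D u ^ 2 ≤ l2sq D u * l2sq D (lap u) := by
    rw [← neg_sq, ← setIntegral_mul_lap_eq_neg_gradsq hD hDb hu hu0]
    exact sq_integral_mul_le (memLp_restrict_of_continuous_of_isBounded hu.continuous hDb 2)
      (memLp_restrict_of_continuous_of_isBounded (continuous_lap hu) hDb 2)
  rcases (gradsq_nonneg D u).eq_or_lt with h0 | hpos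
  · rw [← h0]
    exact mul_nonneg hC (l2sq_nonneg D _)
  · refine le_of_mul_le_mul_left ?_ hpos
    calc gradsq D u * gradsq D u = gradsq D u ^ 2 := (sq _).symm
      _ ≤ l2sq D u * l2sq D (lap u) := hCS
      _ ≤ C * gradsq D u * l2sq D (lap u) := mul_le_mul_of_nonneg_right hP (l2sq_nonneg D _)
      _ = gradsq D u * (C * l2sq D (lap u)) := by ring

end Planar

/-! ### The enstrophy inequality at a fixed time -/

/-- The enstrophy decay rate obtained from the Poincaré inequality `κ ‖u‖² ≤ |D| ‖∇u‖²`; the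
constant `α` of the theorem is the case `κ = π`. -/
noncomputable def decayRate (D : Set (ℝ × ℝ)) (κ β ν r : ℝ) : ℝ :=
  r / 2 + κ * ν / area D - |β| / 2 * (area D / κ + 1)

section Tendency

variable {D : Set (ℝ × ℝ)} {κ β ν r : ℝ} {v φ w F : ℝ × ℝ → ℝ}

lemma setIntegral_mul_tendency_eq (hD : IsOpen D) (hDb : Bornology.IsBounded D)
    (hv : ContDiff ℝ 2 v) (hφ : ContDiff ℝ 2 φ) (hw : Continuous w)
    (hv0 : ∀ p ∈ frontier D, v p = 0)
    (heq : ∀ p ∈ D, w p + jac φ v p + β * pdx φ p = F p + ν * lap v p - r * v p) :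
    ∫ p in D, v p * w p = (∫ p in D, v p * F p) - ν * gradsq D v - r * l2sq D v
      - β * ∫ p in D, v p * pdx φ p := by
  have hv1 : ContDiff ℝ 1 v := hv.of_le one_le_two
  have hφ1 : ContDiff ℝ 1 φ := hφ.of_le one_le_two
  have hF : ∀ p ∈ D, v p * F p = v p * w p + v p * jac φ v p + β * (v p * pdx φ p)
      + r * v p ^ 2 - ν * (v p * lap v p) :=
    fun p hp => by linear_combination -v p * heq p hp
  have integrable_mul {g : ℝ × ℝ → ℝ} (hg : Continuous g) :
      Integrable (fun p => v p * g p) (volume.restrict D) :=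
    integrableOn_of_continuous_of_isBounded (hv.continuous.mul hg) hDb
  have hw_jac := (integrable_mul hw).fun_add (integrable_mul (continuous_jac hφ1 hv1))
  have hbeta := (integrable_mul (continuous_pdx hφ1)).const_mul β
  have hlap := (integrable_mul (continuous_lap hv)).const_mul ν
  have hsq : Integrable (fun p => r * v p ^ 2) (volume.restrict D) :=
    integrableOn_of_continuous_of_isBounded ((hv.continuous.pow 2).const_mul r) hDb
  rw [setIntegral_congr_fun hD.measurableSet hF,
    integral_sub ((hw_jac.fun_add hbeta).fun_add hsq) hlap,
    integral_add (hw_jac.fun_add hbeta) hsq, integral_add hw_jac hbeta,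
    integral_add (integrable_mul hw) (integrable_mul (continuous_jac hφ1 hv1)),
    integral_const_mul, integral_const_mul, integral_const_mul,
    setIntegral_mul_jac_eq_zero hD hDb hφ hv1 hv0, setIntegral_mul_lap_eq_neg_gradsq hD hDb hv hv0,
    l2sq]
  ring

lemma two_mul_setIntegral_mul_le (hr : 0 < r) (hv : MemLp v 2 (volume.restrict D))
    (hF : MemLp F 2 (volume.restrict D)) :
    2 * ∫ p in D, v p * F p ≤ r * l2sq D v + 1 / r * l2sq D F := by
  refine two_mul_le_add_of_sq_le_mul (mul_nonneg hr.le (l2sq_nonneg D v))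
    (mul_nonneg (one_div_pos.2 hr).le (l2sq_nonneg D F)) ?_
  rw [mul_mul_mul_comm, mul_one_div_cancel hr.ne', one_mul]
  exact sq_integral_mul_le hv hF

lemma two_mul_abs_setIntegral_mul_pdx_le (hD : IsOpen D) (hDb : Bornology.IsBounded D)
    (hκ : 0 < κ) (hκ8 : κ ≤ 8) (hv : Continuous v) (hφ : ContDiff ℝ 2 φ)
    (hφ0 : ∀ p ∈ frontier D, φ p = 0) (hvφ : ∀ p ∈ D, v p = lap φ p) :
    2 * |∫ p in D, v p * pdx φ p| ≤ (area D / κ + 1) * l2sq D v := by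
  have hφ1 : ContDiff ℝ 1 φ := hφ.of_le one_le_two
  have hC : 0 ≤ area D / κ := div_nonneg (area_nonneg D) hκ.le
  have hgrad : l2sq D (pdx φ) ≤ area D / κ * l2sq D v :=
    calc l2sq D (pdx φ) ≤ gradsq D φ := by
          rw [gradsq_eq_add hDb hφ1]
          exact le_add_of_nonneg_right (l2sq_nonneg D _)
      _ ≤ area D / κ * l2sq D (lap φ) := gradsq_le_mul_l2sq_lap hD hDb hC hφ hφ0
          (l2sq_le_area_div_mul_gradsq hD hDb hκ hκ8 hφ1 hφ0)
      _ = area D / κ * l2sq D v := by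
          congr 1
          exact setIntegral_congr_fun hD.measurableSet fun p hp => by rw [hvφ p hp]
  rw [add_one_mul]
  refine two_mul_le_add_of_sq_le_mul (mul_nonneg hC (l2sq_nonneg D v)) (l2sq_nonneg D v) ?_
  calc |∫ p in D, v p * pdx φ p| ^ 2 ≤ l2sq D v * l2sq D (pdx φ) := by
        rw [sq_abs]
        exact sq_integral_mul_le (memLp_restrict_of_continuous_of_isBounded hv hDb 2)
          (memLp_restrict_of_continuous_of_isBounded (continuous_pdx hφ1) hDb 2)
    _ ≤ l2sq D v * (area D / κ * l2sq D v) := mul_le_mul_of_nonneg_left hgrad (l2sq_nonneg D v)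
    _ = area D / κ * l2sq D v * l2sq D v := mul_comm _ _

lemma two_mul_setIntegral_mul_tendency_le (hD : IsOpen D) (hDb : Bornology.IsBounded D)
    (hκ : 0 < κ) (hκ8 : κ ≤ 8) (hν : 0 ≤ ν) (hr : 0 < r)
    (hv : ContDiff ℝ 2 v) (hφ : ContDiff ℝ 2 φ) (hw : Continuous w)
    (hv0 : ∀ p ∈ frontier D, v p = 0) (hφ0 : ∀ p ∈ frontier D, φ p = 0)
    (hvφ : ∀ p ∈ D, v p = lap φ p)
    (heq : ∀ p ∈ D, w p + jac φ v p + β * pdx φ p = F p + ν * lap v p - r * v p) :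
    2 * ∫ p in D, v p * w p ≤ -2 * decayRate D κ β ν r * l2sq D v + 1 / r * l2sq D F := by
  have hv1 : ContDiff ℝ 1 v := hv.of_le one_le_two
  have hφ1 : ContDiff ℝ 1 φ := hφ.of_le one_le_two
  have hFc : Continuous fun p => w p + jac φ v p + β * pdx φ p - ν * lap v p + r * v p :=
    (((hw.add (continuous_jac hφ1 hv1)).add ((continuous_pdx hφ1).const_mul β)).sub
      ((continuous_lap hv).const_mul ν)).add (hv.continuous.const_mul r)
  have hF : MemLp F 2 (volume.restrict D) := by
    refine (memLp_restrict_of_continuous_of_isBounded hFc hDb 2).ae_eq ?_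
    filter_upwards [ae_restrict_mem hD.measurableSet] with p hp
    linear_combination heq p hp
  have hforcing := two_mul_setIntegral_mul_le hr
    (memLp_restrict_of_continuous_of_isBounded hv.continuous hDb 2) hF
  have hviscous : ν * (κ / area D * l2sq D v) ≤ ν * gradsq D v :=
    mul_le_mul_of_nonneg_left (div_area_mul_l2sq_le_gradsq hD hDb hκ8 hv1 hv0) hν
  have hbeta : -(β * ∫ p in D, v p * pdx φ p) * 2 ≤ |β| * ((area D / κ + 1) * l2sq D v) :=
    calc -(β * ∫ p in D, v p * pdx φ p) * 2 ≤ |β| * (2 * |∫ p in D, v p * pdx φ p|) := by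
          rw [mul_left_comm, mul_comm 2, ← abs_mul]
          exact mul_le_mul_of_nonneg_right (neg_le_abs _) zero_le_two
      _ ≤ _ := mul_le_mul_of_nonneg_left
          (two_mul_abs_setIntegral_mul_pdx_le hD hDb hκ hκ8 hv.continuous hφ hφ0 hvφ)
          (abs_nonneg β)
  rw [setIntegral_mul_tendency_eq hD hDb hv hφ hw hv0 heq, decayRate]
  linear_combination hforcing + 2 * hviscous + hbeta

end Tendency

/-! ### Evolution in time -/

section Evolution

lemma le_exp_mul_add_integral_of_hasDerivAt_le {E E' b : ℝ → ℝ} {a t₀ t : ℝ} (ht : t₀ ≤ t)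
    (hE : ∀ s ∈ Set.Icc t₀ t, HasDerivAt E (E' s) s) (hb : IntervalIntegrable b volume t₀ t)
    (hle : ∀ s ∈ Set.Ioo t₀ t, E' s ≤ a * E s + b s) :
    E t ≤ E t₀ * Real.exp (a * (t - t₀)) + ∫ s in t₀..t, b s * Real.exp (a * (t - s)) := by
  have hexp (s : ℝ) :
      HasDerivAt (fun s => Real.exp (a * (t - s))) (Real.exp (a * (t - s)) * -a) s := by
    simpa using (((hasDerivAt_id s).const_sub t).const_mul a).exp
  have hprod (s : ℝ) (hs : s ∈ Set.Icc t₀ t) := (hE s hs).mul (hexp s)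
  have hbexp : IntervalIntegrable (fun s => b s * Real.exp (a * (t - s))) volume t₀ t :=
    hb.mul_continuousOn (by fun_prop)
  have h := intervalIntegral.sub_le_integral_of_hasDeriv_right_of_le ht
    (fun s hs => (hprod s hs).continuousAt.continuousWithinAt)
    (fun s hs => (hprod s (Set.Ioo_subset_Icc_self hs)).hasDerivWithinAt)
    ((intervalIntegrable_iff_integrableOn_Icc_of_le ht).1 hbexp) fun s hs => by
      linear_combination Real.exp (a * (t - s)) * hle s hs
  simp only [Pi.mul_apply, sub_self, mul_zero, Real.exp_zero, mul_one] at h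
  linear_combination h

variable {D : Set (ℝ × ℝ)} {q : ℝ → ℝ × ℝ → ℝ}

lemma hasDerivAt_time (hq : ContDiff ℝ 1 (Function.uncurry q)) (t : ℝ) (p : ℝ × ℝ) :
    HasDerivAt (q · p) (fderiv ℝ (Function.uncurry q) (t, p) (1, 0)) t :=
  HasFDerivAt.comp_hasDerivAt (l := Function.uncurry q) t
    (hq.differentiable one_ne_zero (t, p)).hasFDerivAt
    ((hasDerivAt_id t).prodMk (hasDerivAt_const t p))

lemma continuous_deriv_time (hq : ContDiff ℝ 1 (Function.uncurry q)) :
    Continuous (Function.uncurry fun t p => deriv (q · p) t) := by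
  have h : (Function.uncurry fun t p => deriv (q · p) t) =
      fun z => fderiv ℝ (Function.uncurry q) z (1, 0) :=
    funext fun z => (hasDerivAt_time hq z.1 z.2).deriv
  rw [h]
  exact (hq.continuous_fderiv one_ne_zero).clm_apply continuous_const

lemma hasDerivAt_l2sq (hD : MeasurableSet D) (hDb : Bornology.IsBounded D)
    (hq : ContDiff ℝ 1 (Function.uncurry q)) (t : ℝ) :
    HasDerivAt (fun s => l2sq D (q s)) (2 * ∫ p in D, q t p * deriv (q · p) t) t := by
  have hderiv (s : ℝ) (p : ℝ × ℝ) :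
      HasDerivAt (fun s => q s p ^ 2) (2 * (q s p * deriv (q · p) s)) s := by
    simpa [mul_assoc] using (hasDerivAt_time hq s p).differentiableAt.hasDerivAt.fun_pow 2
  rw [← integral_const_mul]
  exact hasDerivAt_setIntegral_of_isBounded hderiv
    (fun s => (hq.continuous.comp (Continuous.prodMk_right s)).pow 2)
    ((hq.continuous.mul (continuous_deriv_time hq)).const_mul 2) hDb hD t

lemma contDiff_of_smoothField (hq : SmoothField q) (t : ℝ) {n : ℕ∞} : ContDiff ℝ n (q t) :=
  ((hq : ContDiff ℝ _ (Function.uncurry q)).comp (contDiff_const.prodMk contDiff_id)).of_le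
    (mod_cast le_top)

end Evolution

theorem enstrophy_decay_estimate_general {D : Set (ℝ × ℝ)} (hD : IsOpen D)
    (hDb : Bornology.IsBounded D) {κ β ν r : ℝ} (hκ : 0 < κ) (hκ8 : κ ≤ 8) (hν : 0 ≤ ν)
    (hr : 0 < r) {q ψ f : ℝ → ℝ × ℝ → ℝ} (hq : ContDiff ℝ 1 (Function.uncurry q))
    (hq2 : ∀ t, 0 ≤ t → ContDiff ℝ 2 (q t)) (hψ : ∀ t, 0 ≤ t → ContDiff ℝ 2 (ψ t))
    (hsol : SolvesBVE D β ν r q ψ f (fun _ _ => 0)) {t : ℝ} (ht : 0 ≤ t)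
    (hf : IntervalIntegrable (fun s => l2sq D (f s)) volume 0 t) :
    l2sq D (q t) ≤ l2sq D (q 0) * Real.exp (-2 * decayRate D κ β ν r * t)
      + (1 / r) * ∫ s in (0:ℝ)..t,
          l2sq D (f s) * Real.exp (2 * decayRate D κ β ν r * (s - t)) := by
  obtain ⟨hlap, hbdry, hpde⟩ := hsol
  have htendency (s : ℝ) (hs : s ∈ Set.Ioo 0 t) :=
    two_mul_setIntegral_mul_tendency_le hD hDb hκ hκ8 hν hr (hq2 s hs.1.le) (hψ s hs.1.le)
      ((continuous_deriv_time hq).comp (Continuous.prodMk_right s))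
      (fun p hp => (hbdry s hs.1.le p hp).1) (fun p hp => (hbdry s hs.1.le p hp).2)
      (hlap s hs.1.le) fun p hp => (hpde s hs.1.le p hp).trans (add_zero _)
  have hgronwall := le_exp_mul_add_integral_of_hasDerivAt_le ht
    (fun s _ => hasDerivAt_l2sq hD.measurableSet hDb hq s) (hf.const_mul (1 / r)) htendency
  have hexponent (s : ℝ) : -2 * decayRate D κ β ν r * (t - s) =
      2 * decayRate D κ β ν r * (s - t) := by ring
  simpa only [sub_zero, hexponent, mul_assoc (1 / r), intervalIntegral.integral_const_mul]
    using hgronwall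

/-- Lemma 1, first enstrophy estimate.
If `q` is a (sufficiently smooth) solution of the barotropic vorticity equation
`q_t + J(ψ,q) + βψ_x = f + νΔq - rq`, `q = Δψ`, with zero boundary conditions
on `∂D` and initial condition `q(·,·,0) = q₀`, then for all `t ≥ 0`,
`‖q(t)‖² ≤ ‖q₀‖² e^{-2αt} + (1/r) ∫₀ᵗ ‖f(s)‖² e^{2α(s-t)} ds`,
where `α = r/2 + πν/|D| - (|β|/2)(|D|/π + 1)`. -/
theorem enstrophy_decay_estimate
    (D : Set (ℝ × ℝ)) (hD : IsOpen D) (hDb : Bornology.IsBounded D)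
    (β ν r : ℝ) (hν : 0 < ν) (hr : 0 < r)
    (q ψ f : ℝ → ℝ × ℝ → ℝ) (q₀ : ℝ × ℝ → ℝ)
    (hq : SmoothField q) (hψ : SmoothField ψ)
    (hf : MeanSquareIntegrable D f)
    (hsol : SolvesBVE D β ν r q ψ f (fun _ _ => 0))
    (hinit : q 0 = q₀) :
    ∀ t, 0 ≤ t →
      l2sq D (q t) ≤
        l2sq D q₀ * Real.exp (-2 * alphaConst D β ν r * t)
          + (1 / r) * ∫ s in (0:ℝ)..t,
              l2sq D (f s) * Real.exp (2 * alphaConst D β ν r * (s - t)) := by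
  intro t ht
  subst hinit
  exact enstrophy_decay_estimate_general hD hDb pi_pos (pi_le_four.trans (by norm_num)) hν.le hr
    (hq.of_le (mod_cast le_top)) (fun t _ => contDiff_of_smoothField hq t)
    (fun t _ => contDiff_of_smoothField hψ t) hsol ht
    (ht.eq_or_lt.elim (fun h => h ▸ IntervalIntegrable.refl) (hf.2 t))
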